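/- arXiv:2003.00249 — 7 statements merged into one kernel-verified Lean document; each statement's English description precedes it below -/
import Mathlib

section
/- Let A be a commutative ring in which 2 = 0, let a₀, a₁, a₂, a₃ ∈ A and let α, β, γ, δ ∈ A satisfy αδ + βγ = 1. Define the transformed coefficients a₀', a₁', a₂', a₃' ∈ A by the identity a₀'x₁³ + a₁'x₁²x₂ + a₂'x₁x₂² + a₃'x₂³ = a(αx₁ + βx₂, γx₁ + δx₂) in A[x₁,x₂], where a = a₀x₁³ + a₁x₁²x₂ + a₂x₁x₂² + a₃x₂³. Then a₀'a₃' + a₁'a₂' = a₀a₃ + a₁a₂, i.e., the invariant K₁ is invariant under the action of SL(2) on binary cubic forms in characteristic 2. -/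
/-!
Dehomogenising at `x₂ = 1` turns the defining identity into an equality of univariate cubics, from
which the transformed coefficients are read off explicitly. With `D = αδ + βγ`, expanding gives
that the new `K₁` is congruent to `D³ (a₀a₃ + a₁a₂)` modulo `2`, so the claim follows from `2 = 0` and `D = 1`.
-/

open MvPolynomial

lemma cubic_coeffs_eq {A : Type*} [CommRing A] {a b c d p q r s : A}
    (h : (C a * X 0 ^ 3 + C b * X 0 ^ 2 * X 1 + C c * X 0 * X 1 ^ 2 + C d * X 1 ^ 3
        : MvPolynomial (Fin 2) A) =
      C p * X 0 ^ 3 + C q * X 0 ^ 2 * X 1 + C r * X 0 * X 1 ^ 2 + C s * X 1 ^ 3) :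
    a = p ∧ b = q ∧ c = r ∧ d = s := by
  -- Dehomogenise at `x₂ = 1` and compare coefficients of univariate polynomials.
  have hdeh := congrArg (aeval ![(Polynomial.X : Polynomial A), 1]) h
  simp only [map_add, map_mul, map_pow, aeval_X, algHom_C, Polynomial.algebraMap_eq,
    Matrix.cons_val_zero, Matrix.cons_val_one, one_pow, mul_one] at hdeh
  have e := fun n => congrArg (fun f => Polynomial.coeff f n) hdeh
  have e0 := e 0
  have e1 := e 1
  have e2 := e 2
  have e3 := e 3
  simp [Polynomial.coeff_X, Polynomial.coeff_C, Polynomial.coeff_X_pow] at e0 e1 e2 e3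
  exact ⟨e3, e2, e1, e0⟩

/-- In characteristic 2, the invariant `K₁ = a₀a₃ + a₁a₂` of a binary cubic
`a₀x₁³ + a₁x₁²x₂ + a₂x₁x₂² + a₃x₂³` is invariant under the SL(2)-action
`x₁ ↦ αx₁ + βx₂`, `x₂ ↦ γx₁ + δx₂` (with `αδ + βγ = 1`). -/
theorem K1_SL2_invariant (A : Type*) [CommRing A] (h2 : (2 : A) = 0)
    (a₀ a₁ a₂ a₃ α β γ δ a₀' a₁' a₂' a₃' : A)
    (hdet : α * δ + β * γ = 1)
    (htrans :
      (C a₀' * X 0 ^ 3 + C a₁' * X 0 ^ 2 * X 1 + C a₂' * X 0 * X 1 ^ 2 + C a₃' * X 1 ^ 3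
        : MvPolynomial (Fin 2) A) =
      bind₁ ![C α * X 0 + C β * X 1, C γ * X 0 + C δ * X 1]
        (C a₀ * X 0 ^ 3 + C a₁ * X 0 ^ 2 * X 1 + C a₂ * X 0 * X 1 ^ 2 + C a₃ * X 1 ^ 3)) :
    a₀' * a₃' + a₁' * a₂' = a₀ * a₃ + a₁ * a₂ := by
  have hexp : bind₁ ![C α * X 0 + C β * X 1, C γ * X 0 + C δ * X 1]
        (C a₀ * X 0 ^ 3 + C a₁ * X 0 ^ 2 * X 1 + C a₂ * X 0 * X 1 ^ 2 + C a₃ * X 1 ^ 3) =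
      (C (a₀ * α ^ 3 + a₁ * α ^ 2 * γ + a₂ * α * γ ^ 2 + a₃ * γ ^ 3) * X 0 ^ 3 +
        C (3 * a₀ * α ^ 2 * β + a₁ * (α ^ 2 * δ + 2 * α * β * γ) +
          a₂ * (2 * α * γ * δ + β * γ ^ 2) + 3 * a₃ * γ ^ 2 * δ) * X 0 ^ 2 * X 1 +
        C (3 * a₀ * α * β ^ 2 + a₁ * (2 * α * β * δ + β ^ 2 * γ) +
          a₂ * (α * δ ^ 2 + 2 * β * γ * δ) + 3 * a₃ * γ * δ ^ 2) * X 0 * X 1 ^ 2 +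
        C (a₀ * β ^ 3 + a₁ * β ^ 2 * δ + a₂ * β * δ ^ 2 + a₃ * δ ^ 3) * X 1 ^ 3
        : MvPolynomial (Fin 2) A) := by
    have c2 : (C 2 : MvPolynomial (Fin 2) A) = 2 := map_ofNat C 2
    have c3 : (C 3 : MvPolynomial (Fin 2) A) = 3 := map_ofNat C 3
    simp only [map_add, map_mul, map_pow, bind₁_X_right, bind₁_C_right,
      Matrix.cons_val_zero, Matrix.cons_val_one, c2, c3]
    ring
  obtain ⟨rfl, rfl, rfl, rfl⟩ := cubic_coeffs_eq (htrans.trans hexp)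
  have hD : (α * δ + β * γ) ^ 3 = 1 := by rw [hdet, one_pow]
  -- Modulo `2` the two middle coefficients have only four terms each.
  have h₁ : 3 * a₀ * α ^ 2 * β + a₁ * (α ^ 2 * δ + 2 * α * β * γ) +
      a₂ * (2 * α * γ * δ + β * γ ^ 2) + 3 * a₃ * γ ^ 2 * δ =
      a₀ * α ^ 2 * β + a₁ * α ^ 2 * δ + a₂ * β * γ ^ 2 + a₃ * γ ^ 2 * δ := by
    linear_combination
      (a₀ * α ^ 2 * β + a₁ * α * β * γ + a₂ * α * γ * δ + a₃ * γ ^ 2 * δ) * h2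
  have h₂ : 3 * a₀ * α * β ^ 2 + a₁ * (2 * α * β * δ + β ^ 2 * γ) +
      a₂ * (α * δ ^ 2 + 2 * β * γ * δ) + 3 * a₃ * γ * δ ^ 2 =
      a₀ * α * β ^ 2 + a₁ * β ^ 2 * γ + a₂ * α * δ ^ 2 + a₃ * γ * δ ^ 2 := by
    linear_combination
      (a₀ * α * β ^ 2 + a₁ * α * β * δ + a₂ * β * γ * δ + a₃ * γ * δ ^ 2) * h2
  rw [h₁, h₂]
  -- The multiplier of `h2` is half of the new `K₁` minus `D³` times the old one, where `D = αδ + βγ`.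
  linear_combination (a₀ * a₃ + a₁ * a₂) * hD +
    (a₀ ^ 2 * α ^ 3 * β ^ 3 + a₁ ^ 2 * α ^ 2 * β ^ 2 * γ * δ
      + a₂ ^ 2 * α * β * γ ^ 2 * δ ^ 2 + a₃ ^ 2 * γ ^ 3 * δ ^ 3
      + a₀ * a₁ * (α ^ 3 * β ^ 2 * δ + α ^ 2 * β ^ 3 * γ)
      + a₀ * a₂ * (α ^ 3 * β * δ ^ 2 + α * β ^ 3 * γ ^ 2)
      + a₁ * a₃ * (α ^ 2 * γ * δ ^ 3 + β ^ 2 * γ ^ 3 * δ)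
      + a₂ * a₃ * (α * γ ^ 2 * δ ^ 3 + β * γ ^ 3 * δ ^ 2)
      - (a₀ * a₃ + a₁ * a₂) * (α ^ 2 * β * γ * δ ^ 2 + α * β ^ 2 * γ ^ 2 * δ)) * h2
end

section
/- Let A be a commutative ring in which 2 = 0, let a₀, a₁, a₂, a₃ ∈ A and let α, β, γ, δ ∈ A satisfy αδ + βγ = 1. Define the transformed coefficients a₀', a₁', a₂', a₃' ∈ A by the identity a₀'x₁³ + a₁'x₁²x₂ + a₂'x₁x₂² + a₃'x₂³ = a(αx₁ + βx₂, γx₁ + δx₂) in A[x₁,x₂], where a = a₀x₁³ + a₁x₁²x₂ + a₂x₁x₂² + a₃x₂³. Let q(a) denote the binary quadratic (a₀a₂ + a₁²)x₁² + (a₀a₃ + a₁a₂)x₁x₂ + (a₁a₃ + a₂²)x₂². Then q(a') = q(a)(αx₁ + βx₂, γx₁ + δx₂) in A[x₁,x₂]; that is, the quadratic covariant (a₀a₂ + a₁²)x₁² + (a₀a₃ + a₁a₂)x₁x₂ + (a₁a₃ + a₂²)x₂² of a binary cubic is SL(2)-equivariant in characteristic 2. -/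
/-!
Over any commutative ring the Hessian
`h(a) = (a₁² - 3a₀a₂)x₁² + (a₁a₂ - 9a₀a₃)x₁x₂ + (a₂² - 3a₁a₃)x₂²` of a binary cubic satisfies
`h(a') = (αδ - βγ)² · h(a)(αx₁ + βx₂, γx₁ + δx₂)`. When `2 = 0` the forms `q` and `h` coincide, and
`αδ - βγ = αδ + βγ = 1`, which gives the claim. The transformed coefficients are made explicit by
comparing coefficients of binary cubics (`binary_cubic_coeffs_eq`), and the covariance is then a
polynomial identity checked on each coefficient of `q`.
-/

open MvPolynomial

/-- A binary cubic form determines its coefficients: dehomogenizing by `x₁ ↦ 1`, `x₂ ↦ t` reduces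
this to comparing coefficients of univariate polynomials in `t`. -/
theorem binary_cubic_coeffs_eq {A : Type*} [CommRing A] {a b c d a' b' c' d' : A}
    (h : (C a * X 0 ^ 3 + C b * X 0 ^ 2 * X 1 + C c * X 0 * X 1 ^ 2 + C d * X 1 ^ 3
        : MvPolynomial (Fin 2) A) =
      C a' * X 0 ^ 3 + C b' * X 0 ^ 2 * X 1 + C c' * X 0 * X 1 ^ 2 + C d' * X 1 ^ 3) :
    a = a' ∧ b = b' ∧ c = c' ∧ d = d' := by
  have h' := congrArg (aeval ![(1 : Polynomial A), Polynomial.X]) h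
  simp only [map_add, map_mul, map_pow, aeval_X, aeval_C, Polynomial.algebraMap_eq,
    Matrix.cons_val_zero, Matrix.cons_val_one, one_pow, mul_one] at h'
  have hc (n : ℕ) := congrArg (fun p => Polynomial.coeff p n) h'
  have h0 := hc 0
  have h1 := hc 1
  have h2 := hc 2
  have h3 := hc 3
  simp [Polynomial.coeff_X_pow, Polynomial.coeff_C, Polynomial.coeff_X] at h0 h1 h2 h3
  exact ⟨h0, h1, h2, h3⟩

/-- In characteristic 2, the quadratic covariant
`q(a) = (a₀a₂ + a₁²)x₁² + (a₀a₃ + a₁a₂)x₁x₂ + (a₁a₃ + a₂²)x₂²` of a binary cubic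
`a = a₀x₁³ + a₁x₁²x₂ + a₂x₁x₂² + a₃x₂³` is SL(2)-equivariant:
if `a'` is the transform of `a` under `x₁ ↦ αx₁ + βx₂`, `x₂ ↦ γx₁ + δx₂`
(with `αδ + βγ = 1`), then `q(a')` is the transform of `q(a)`. -/
theorem quadratic_covariant_SL2_equivariant (A : Type*) [CommRing A] (h2 : (2 : A) = 0)
    (a₀ a₁ a₂ a₃ α β γ δ a₀' a₁' a₂' a₃' : A)
    (hdet : α * δ + β * γ = 1)
    (htrans :
      (C a₀' * X 0 ^ 3 + C a₁' * X 0 ^ 2 * X 1 + C a₂' * X 0 * X 1 ^ 2 + C a₃' * X 1 ^ 3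
        : MvPolynomial (Fin 2) A) =
      bind₁ ![C α * X 0 + C β * X 1, C γ * X 0 + C δ * X 1]
        (C a₀ * X 0 ^ 3 + C a₁ * X 0 ^ 2 * X 1 + C a₂ * X 0 * X 1 ^ 2 + C a₃ * X 1 ^ 3)) :
    (C (a₀' * a₂' + a₁' ^ 2) * X 0 ^ 2 + C (a₀' * a₃' + a₁' * a₂') * X 0 * X 1
        + C (a₁' * a₃' + a₂' ^ 2) * X 1 ^ 2 : MvPolynomial (Fin 2) A) =
      bind₁ ![C α * X 0 + C β * X 1, C γ * X 0 + C δ * X 1]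
        (C (a₀ * a₂ + a₁ ^ 2) * X 0 ^ 2 + C (a₀ * a₃ + a₁ * a₂) * X 0 * X 1
          + C (a₁ * a₃ + a₂ ^ 2) * X 1 ^ 2) := by
  have hD : α * δ - β * γ = 1 := by linear_combination hdet - β * γ * h2
  obtain ⟨e₀, e₁, e₂, e₃⟩ := binary_cubic_coeffs_eq
    (a' := a₀ * α ^ 3 + a₁ * α ^ 2 * γ + a₂ * α * γ ^ 2 + a₃ * γ ^ 3)
    (b' := 3 * a₀ * α ^ 2 * β + a₁ * (α ^ 2 * δ + 2 * α * β * γ)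
      + a₂ * (2 * α * γ * δ + β * γ ^ 2) + 3 * a₃ * γ ^ 2 * δ)
    (c' := 3 * a₀ * α * β ^ 2 + a₁ * (2 * α * β * δ + β ^ 2 * γ)
      + a₂ * (α * δ ^ 2 + 2 * β * γ * δ) + 3 * a₃ * γ * δ ^ 2)
    (d' := a₀ * β ^ 3 + a₁ * β ^ 2 * δ + a₂ * β * δ ^ 2 + a₃ * δ ^ 3)
    (htrans.trans (by
      simp only [map_add, map_mul, map_pow, bind₁_X_right, bind₁_C_right,
        Matrix.cons_val_zero, Matrix.cons_val_one, map_ofNat]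
      ring))
  -- In each of the next three identities the coefficient of `hD` is `αδ - βγ + 1` times a
  -- coefficient of the transformed Hessian of `a`, while `e` and the multiple of `h2` account
  -- for `q - h = 4a₀a₂x₁² + 10a₀a₃x₁x₂ + 4a₁a₃x₂²` at `a'` and at `a` respectively.
  have q₀ : a₀' * a₂' + a₁' ^ 2 = (a₀ * a₂ + a₁ ^ 2) * α ^ 2 + (a₀ * a₃ + a₁ * a₂) * (α * γ)
      + (a₁ * a₃ + a₂ ^ 2) * γ ^ 2 := by
    have e : 2 * a₀' * a₂' * (2 : A) = 0 := by rw [h2, mul_zero]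
    rw [e₀, e₂] at e
    rw [e₀, e₁, e₂]
    linear_combination (α * δ - β * γ + 1) * ((a₁ ^ 2 - 3 * a₀ * a₂) * α ^ 2
      + (a₁ * a₂ - 9 * a₀ * a₃) * (α * γ) + (a₂ ^ 2 - 3 * a₁ * a₃) * γ ^ 2) * hD + e
      - (2 * a₀ * a₂ * α ^ 2 + 5 * a₀ * a₃ * (α * γ) + 2 * a₁ * a₃ * γ ^ 2) * h2
  have q₁ : a₀' * a₃' + a₁' * a₂' = (a₀ * a₂ + a₁ ^ 2) * (2 * α * β)
      + (a₀ * a₃ + a₁ * a₂) * (α * δ + β * γ) + (a₁ * a₃ + a₂ ^ 2) * (2 * γ * δ) := by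
    have e : 5 * a₀' * a₃' * (2 : A) = 0 := by rw [h2, mul_zero]
    rw [e₀, e₃] at e
    rw [e₀, e₁, e₂, e₃]
    linear_combination (α * δ - β * γ + 1) * ((a₁ ^ 2 - 3 * a₀ * a₂) * (2 * α * β)
      + (a₁ * a₂ - 9 * a₀ * a₃) * (α * δ + β * γ) + (a₂ ^ 2 - 3 * a₁ * a₃) * (2 * γ * δ)) * hD + e
      - (2 * a₀ * a₂ * (2 * α * β) + 5 * a₀ * a₃ * (α * δ + β * γ)
        + 2 * a₁ * a₃ * (2 * γ * δ)) * h2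
  have q₂ : a₁' * a₃' + a₂' ^ 2 = (a₀ * a₂ + a₁ ^ 2) * β ^ 2 + (a₀ * a₃ + a₁ * a₂) * (β * δ)
      + (a₁ * a₃ + a₂ ^ 2) * δ ^ 2 := by
    have e : 2 * a₁' * a₃' * (2 : A) = 0 := by rw [h2, mul_zero]
    rw [e₁, e₃] at e
    rw [e₁, e₂, e₃]
    linear_combination (α * δ - β * γ + 1) * ((a₁ ^ 2 - 3 * a₀ * a₂) * β ^ 2
      + (a₁ * a₂ - 9 * a₀ * a₃) * (β * δ) + (a₂ ^ 2 - 3 * a₁ * a₃) * δ ^ 2) * hD + e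
      - (2 * a₀ * a₂ * β ^ 2 + 5 * a₀ * a₃ * (β * δ) + 2 * a₁ * a₃ * δ ^ 2) * h2
  rw [q₀, q₁, q₂]
  simp only [map_add, map_mul, map_pow, bind₁_X_right, bind₁_C_right,
    Matrix.cons_val_zero, Matrix.cons_val_one, map_ofNat]
  ring
end

section
/- Let A be a commutative ring in which 2 = 0, let a₀, a₁, a₂, a₃, b₀, …, b₆ ∈ A and let v₀, v₁, v₂, v₃ ∈ A. Define b̃₀, …, b̃₆ ∈ A by the identity Σⱼ b̃ⱼ x₁^{6−j}x₂^j = Σⱼ bⱼ x₁^{6−j}x₂^j + v² + a·v in A[x₁,x₂], where a = Σᵢ aᵢ x₁^{3−i}x₂^i and v = Σᵢ vᵢ x₁^{3−i}x₂^i. Then K₃(a₀,…,a₃, b̃₀,…,b̃₆) = K₃(a₀,…,a₃, b₀,…,b₆): the invariant K₃ is invariant under the substitution b ↦ b + v² + av coming from the change of variable y ↦ y + v in the equation y² + ay = b. -/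
/-!
Dehomogenizing at `x₁ = 1` and comparing coefficients expresses each `b̃ⱼ` through `a`, `b`, `v`.
The square of `(av)₃ = a₀v₃ + a₁v₂ + a₂v₁ + a₃v₀`, multiplied by `K₁`, is modulo `2` exactly what
the coefficients `v₀²`, `v₁²`, `v₂²`, `v₃²` of `v²` contribute through the terms of `K₃` linear in
`b₀`, `b₂`, `b₄`, `b₆`, so the parts quadratic in `v` cancel. The part linear in `v` is the linear
part of `K₃` evaluated at `av`, and it vanishes modulo `2`. Both cancellations are polynomial
identities modulo `2`.
-/

open MvPolynomial

/-- The invariant `K₃` of a pair `(a, b)` of a binary cubic and a binary sextic. -/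
def K₃ {A : Type*} [CommRing A] (a₀ a₁ a₂ a₃ b₀ b₁ b₂ b₃ b₄ b₅ b₆ : A) : A :=
  (a₀ * a₃ + a₁ * a₂) * b₃ ^ 2
    + (a₀ ^ 2 * a₃ ^ 2 + a₀ * a₂ ^ 3 + a₁ ^ 3 * a₃ + a₁ ^ 2 * a₂ ^ 2) * b₃
    + (a₀ * a₃ + a₁ * a₂) * a₁ ^ 2 * b₄
    + (a₀ * a₃ + a₁ * a₂) * a₂ ^ 2 * b₂
    + (a₀ ^ 2 * a₁ * a₃ + a₀ ^ 2 * a₂ ^ 2 + a₀ * a₁ ^ 2 * a₂ + a₁ ^ 4) * b₅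
    + (a₀ * a₂ * a₃ ^ 2 + a₁ ^ 2 * a₃ ^ 2 + a₁ * a₂ ^ 2 * a₃ + a₂ ^ 4) * b₁
    + (a₀ * a₃ + a₁ * a₂) * a₀ ^ 2 * b₆
    + (a₀ * a₃ + a₁ * a₂) * a₃ ^ 2 * b₀

/-- Polynomials of degree at most six are determined by their coefficients, for explicit sums. -/
lemma coeffs_eq_of_sextic_eq {A : Type*} [CommRing A]
    {c₀ c₁ c₂ c₃ c₄ c₅ c₆ d₀ d₁ d₂ d₃ d₄ d₅ d₆ : A}
    (h : (Polynomial.C c₀ + Polynomial.C c₁ * Polynomial.X + Polynomial.C c₂ * Polynomial.X ^ 2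
        + Polynomial.C c₃ * Polynomial.X ^ 3 + Polynomial.C c₄ * Polynomial.X ^ 4
        + Polynomial.C c₅ * Polynomial.X ^ 5 + Polynomial.C c₆ * Polynomial.X ^ 6
        : Polynomial A) =
      Polynomial.C d₀ + Polynomial.C d₁ * Polynomial.X + Polynomial.C d₂ * Polynomial.X ^ 2
        + Polynomial.C d₃ * Polynomial.X ^ 3 + Polynomial.C d₄ * Polynomial.X ^ 4
        + Polynomial.C d₅ * Polynomial.X ^ 5 + Polynomial.C d₆ * Polynomial.X ^ 6) :
    c₀ = d₀ ∧ c₁ = d₁ ∧ c₂ = d₂ ∧ c₃ = d₃ ∧ c₄ = d₄ ∧ c₅ = d₅ ∧ c₆ = d₆ := by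
  have key := fun n => congrArg (fun p => Polynomial.coeff p n) h
  refine ⟨by simpa [Polynomial.coeff_X, Polynomial.coeff_C] using key 0,
    by simpa [Polynomial.coeff_X, Polynomial.coeff_C, Polynomial.coeff_X_pow] using key 1,
    by simpa [Polynomial.coeff_X, Polynomial.coeff_C, Polynomial.coeff_X_pow] using key 2,
    by simpa [Polynomial.coeff_X, Polynomial.coeff_C, Polynomial.coeff_X_pow] using key 3,
    by simpa [Polynomial.coeff_X, Polynomial.coeff_C, Polynomial.coeff_X_pow] using key 4,
    by simpa [Polynomial.coeff_X, Polynomial.coeff_C, Polynomial.coeff_X_pow] using key 5,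
    by simpa [Polynomial.coeff_X, Polynomial.coeff_C, Polynomial.coeff_X_pow] using key 6⟩

/-- In characteristic 2, the invariant `K₃` is invariant under the substitution
`b ↦ b + v² + av` coming from the change of variable `y ↦ y + v` in `y² + ay = b`. -/
theorem K3_invariant_under_y_shift (A : Type*) [CommRing A] (h2 : (2 : A) = 0)
    (a₀ a₁ a₂ a₃ b₀ b₁ b₂ b₃ b₄ b₅ b₆ v₀ v₁ v₂ v₃ : A)
    (b₀' b₁' b₂' b₃' b₄' b₅' b₆' : A)
    (htrans :
      (C b₀' * X 0 ^ 6 + C b₁' * X 0 ^ 5 * X 1 + C b₂' * X 0 ^ 4 * X 1 ^ 2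
        + C b₃' * X 0 ^ 3 * X 1 ^ 3 + C b₄' * X 0 ^ 2 * X 1 ^ 4 + C b₅' * X 0 * X 1 ^ 5
        + C b₆' * X 1 ^ 6 : MvPolynomial (Fin 2) A) =
      (C b₀ * X 0 ^ 6 + C b₁ * X 0 ^ 5 * X 1 + C b₂ * X 0 ^ 4 * X 1 ^ 2
        + C b₃ * X 0 ^ 3 * X 1 ^ 3 + C b₄ * X 0 ^ 2 * X 1 ^ 4 + C b₅ * X 0 * X 1 ^ 5
        + C b₆ * X 1 ^ 6)
      + (C v₀ * X 0 ^ 3 + C v₁ * X 0 ^ 2 * X 1 + C v₂ * X 0 * X 1 ^ 2 + C v₃ * X 1 ^ 3) ^ 2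
      + (C a₀ * X 0 ^ 3 + C a₁ * X 0 ^ 2 * X 1 + C a₂ * X 0 * X 1 ^ 2 + C a₃ * X 1 ^ 3)
        * (C v₀ * X 0 ^ 3 + C v₁ * X 0 ^ 2 * X 1 + C v₂ * X 0 * X 1 ^ 2 + C v₃ * X 1 ^ 3)) :
    K₃ a₀ a₁ a₂ a₃ b₀' b₁' b₂' b₃' b₄' b₅' b₆' = K₃ a₀ a₁ a₂ a₃ b₀ b₁ b₂ b₃ b₄ b₅ b₆ := by
  -- Dehomogenize: `x₁ ↦ 1`, `x₂ ↦ X`.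
  have h := congrArg
    (aeval (R := A) (fun i : Fin 2 => if i = 0 then (1 : Polynomial A) else Polynomial.X)) htrans
  simp only [map_add, map_mul, map_pow, aeval_X, algHom_C, Polynomial.algebraMap_eq,
    if_true, one_ne_zero, if_false, one_pow, mul_one] at h
  obtain ⟨e₀, e₁, e₂, e₃, e₄, e₅, e₆⟩ := coeffs_eq_of_sextic_eq
    (c₀ := b₀') (c₁ := b₁') (c₂ := b₂') (c₃ := b₃') (c₄ := b₄') (c₅ := b₅') (c₆ := b₆')
    (d₀ := b₀ + v₀ ^ 2 + a₀ * v₀)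
    (d₁ := b₁ + 2 * v₀ * v₁ + (a₀ * v₁ + a₁ * v₀))
    (d₂ := b₂ + (v₁ ^ 2 + 2 * v₀ * v₂) + (a₀ * v₂ + a₁ * v₁ + a₂ * v₀))
    (d₃ := b₃ + 2 * (v₀ * v₃ + v₁ * v₂) + (a₀ * v₃ + a₁ * v₂ + a₂ * v₁ + a₃ * v₀))
    (d₄ := b₄ + (v₂ ^ 2 + 2 * v₁ * v₃) + (a₁ * v₃ + a₂ * v₂ + a₃ * v₁))
    (d₅ := b₅ + 2 * v₂ * v₃ + (a₂ * v₃ + a₃ * v₂))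
    (d₆ := b₆ + v₃ ^ 2 + a₃ * v₃) (by
      rw [h]
      simp only [map_add, map_mul, map_pow, map_ofNat]
      ring)
  simp only [h2, zero_mul, add_zero] at e₁ e₂ e₃ e₄ e₅
  subst e₀ e₁ e₂ e₃ e₄ e₅ e₆
  unfold K₃
  grind
end

section
/- Let A be a commutative ring in which 2 = 0, let a₀, a₁, a₂, a₃, b₀, …, b₆ ∈ A and let α, β, γ, δ ∈ A satisfy αδ + βγ = 1. Define a₀', …, a₃' ∈ A by Σᵢ aᵢ' x₁^{3−i}x₂^i = a(αx₁ + βx₂, γx₁ + δx₂) and b₀', …, b₆' ∈ A by Σⱼ bⱼ' x₁^{6−j}x₂^j = b(αx₁ + βx₂, γx₁ + δx₂) in A[x₁,x₂], where a = Σᵢ aᵢ x₁^{3−i}x₂^i and b = Σⱼ bⱼ x₁^{6−j}x₂^j. Then K₃(a₀',…,a₃', b₀',…,b₆') = K₃(a₀,…,a₃, b₀,…,b₆): the invariant K₃ is invariant under the simultaneous SL(2)-action on the pair (a, b) in characteristic 2. -/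
/-!
Write `D = αδ + βγ`. In characteristic 2 the coefficients of the Hessian of the cubic are
`h₀ = a₀a₂ + a₁²`, `K₁ = a₀a₃ + a₁a₂`, `h₂ = a₁a₃ + a₂²`, and `K₃` regroups (`K₃_eq`) as
`K₁ b₃² + K₁ Q + h₀² b₅ + h₀ h₂ b₃ + h₂² b₁`,
where `Q = a₀²b₆ + a₁²b₄ + a₂²b₂ + a₃²b₀ + a₀a₁b₅ + a₀a₃b₃ + a₂a₃b₁`.

Modulo 2, `K₁` is an invariant of the cubic (factor `D ^ 3`), the middle coefficient `b₃` is an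
invariant of the sextic (factor `D ^ 3`), and the Hessian is a covariant (factor `D ^ 2`). So
`K₁ b₃²` is invariant on its own. The form `Q` is not: it changes by
`K₁ (α²β² b₁ + γ²δ² b₅ + αβγδ b₃) + D b₃ (αβ h₀ + γδ h₂)` up to powers of `D` (`Q_transform`),
and `K₁` times this defect is exactly the change of `h₀² b₅ + h₀ h₂ b₃ + h₂² b₁`.
Altogether `K₃` is multiplied by `D ^ 9`, which is `1` on `SL(2)`.
-/

open MvPolynomial

theorem cubic_ext {A : Type*} [CommRing A] {c₀ c₁ c₂ c₃ d₀ d₁ d₂ d₃ : A}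
    (h : Polynomial.C c₀ + Polynomial.C c₁ * Polynomial.X + Polynomial.C c₂ * Polynomial.X ^ 2
        + Polynomial.C c₃ * Polynomial.X ^ 3
      = Polynomial.C d₀ + Polynomial.C d₁ * Polynomial.X + Polynomial.C d₂ * Polynomial.X ^ 2
        + Polynomial.C d₃ * Polynomial.X ^ 3) :
    c₀ = d₀ ∧ c₁ = d₁ ∧ c₂ = d₂ ∧ c₃ = d₃ := by
  have e := fun k => congrArg (fun p => Polynomial.coeff p k) h
  refine ⟨by simpa using e 0, ?_, ?_, ?_⟩
  · simpa [Polynomial.coeff_C, Polynomial.coeff_X] using e 1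
  · simpa [Polynomial.coeff_C, Polynomial.coeff_X] using e 2
  · simpa [Polynomial.coeff_C, Polynomial.coeff_X] using e 3

theorem sextic_ext {A : Type*} [CommRing A] {c₀ c₁ c₂ c₃ c₄ c₅ c₆ d₀ d₁ d₂ d₃ d₄ d₅ d₆ : A}
    (h : Polynomial.C c₀ + Polynomial.C c₁ * Polynomial.X + Polynomial.C c₂ * Polynomial.X ^ 2
        + Polynomial.C c₃ * Polynomial.X ^ 3 + Polynomial.C c₄ * Polynomial.X ^ 4
        + Polynomial.C c₅ * Polynomial.X ^ 5 + Polynomial.C c₆ * Polynomial.X ^ 6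
      = Polynomial.C d₀ + Polynomial.C d₁ * Polynomial.X + Polynomial.C d₂ * Polynomial.X ^ 2
        + Polynomial.C d₃ * Polynomial.X ^ 3 + Polynomial.C d₄ * Polynomial.X ^ 4
        + Polynomial.C d₅ * Polynomial.X ^ 5 + Polynomial.C d₆ * Polynomial.X ^ 6) :
    c₀ = d₀ ∧ c₁ = d₁ ∧ c₂ = d₂ ∧ c₃ = d₃ ∧ c₄ = d₄ ∧ c₅ = d₅ ∧ c₆ = d₆ := by
  have e := fun k => congrArg (fun p => Polynomial.coeff p k) h
  refine ⟨by simpa using e 0, ?_, ?_, ?_, ?_, ?_, ?_⟩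
  · simpa [Polynomial.coeff_C, Polynomial.coeff_X] using e 1
  · simpa [Polynomial.coeff_C, Polynomial.coeff_X] using e 2
  · simpa [Polynomial.coeff_C, Polynomial.coeff_X] using e 3
  · simpa [Polynomial.coeff_C, Polynomial.coeff_X] using e 4
  · simpa [Polynomial.coeff_C, Polynomial.coeff_X] using e 5
  · simpa [Polynomial.coeff_C, Polynomial.coeff_X] using e 6

/-- The coefficients of the transformed cubic, reduced modulo 2. They are read off after
dehomogenizing at `x₁ = 1`. -/
theorem cubic_coeff {A : Type*} [CommRing A] [CharP A 2]
    {a₀ a₁ a₂ a₃ α β γ δ a₀' a₁' a₂' a₃' : A}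
    (ha :
      (C a₀' * X 0 ^ 3 + C a₁' * X 0 ^ 2 * X 1 + C a₂' * X 0 * X 1 ^ 2 + C a₃' * X 1 ^ 3
        : MvPolynomial (Fin 2) A) =
      bind₁ ![C α * X 0 + C β * X 1, C γ * X 0 + C δ * X 1]
        (C a₀ * X 0 ^ 3 + C a₁ * X 0 ^ 2 * X 1 + C a₂ * X 0 * X 1 ^ 2 + C a₃ * X 1 ^ 3)) :
    a₀' = a₀ * α ^ 3 + a₁ * α ^ 2 * γ + a₂ * α * γ ^ 2 + a₃ * γ ^ 3 ∧
    a₁' = a₀ * α ^ 2 * β + a₁ * α ^ 2 * δ + a₂ * β * γ ^ 2 + a₃ * γ ^ 2 * δ ∧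
    a₂' = a₀ * α * β ^ 2 + a₁ * β ^ 2 * γ + a₂ * α * δ ^ 2 + a₃ * γ * δ ^ 2 ∧
    a₃' = a₀ * β ^ 3 + a₁ * β ^ 2 * δ + a₂ * β * δ ^ 2 + a₃ * δ ^ 3 := by
  have h := congrArg (aeval ![(1 : Polynomial A), Polynomial.X]) ha
  simp only [map_add, map_mul, map_pow, bind₁_X_right, bind₁_C_right, aeval_X, aeval_C,
    Polynomial.algebraMap_eq, Matrix.cons_val_zero, Matrix.cons_val_one, one_pow, mul_one] at h
  apply cubic_ext
  rw [h]
  simp only [map_add, map_mul, map_pow]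
  clear h ha
  generalize (Polynomial.X : Polynomial A) = x
  grind

/-- The coefficients of the transformed sextic, reduced modulo 2. The odd ones involve only
`b₁`, `b₃`, `b₅`, and the middle one is a multiple of `b₃`. -/
theorem sextic_coeff {A : Type*} [CommRing A] [CharP A 2]
    {b₀ b₁ b₂ b₃ b₄ b₅ b₆ α β γ δ b₀' b₁' b₂' b₃' b₄' b₅' b₆' : A}
    (hb :
      (C b₀' * X 0 ^ 6 + C b₁' * X 0 ^ 5 * X 1 + C b₂' * X 0 ^ 4 * X 1 ^ 2
        + C b₃' * X 0 ^ 3 * X 1 ^ 3 + C b₄' * X 0 ^ 2 * X 1 ^ 4 + C b₅' * X 0 * X 1 ^ 5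
        + C b₆' * X 1 ^ 6 : MvPolynomial (Fin 2) A) =
      bind₁ ![C α * X 0 + C β * X 1, C γ * X 0 + C δ * X 1]
        (C b₀ * X 0 ^ 6 + C b₁ * X 0 ^ 5 * X 1 + C b₂ * X 0 ^ 4 * X 1 ^ 2
          + C b₃ * X 0 ^ 3 * X 1 ^ 3 + C b₄ * X 0 ^ 2 * X 1 ^ 4 + C b₅ * X 0 * X 1 ^ 5
          + C b₆ * X 1 ^ 6)) :
    b₀' = α ^ 6 * b₀ + α ^ 5 * γ * b₁ + α ^ 4 * γ ^ 2 * b₂ + α ^ 3 * γ ^ 3 * b₃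
      + α ^ 2 * γ ^ 4 * b₄ + α * γ ^ 5 * b₅ + γ ^ 6 * b₆ ∧
    b₁' = (α * δ + β * γ) * (α ^ 4 * b₁ + α ^ 2 * γ ^ 2 * b₃ + γ ^ 4 * b₅) ∧
    b₂' = α ^ 4 * β ^ 2 * b₀ + α ^ 4 * β * δ * b₁ + α ^ 4 * δ ^ 2 * b₂
      + (α ^ 2 * γ ^ 2 * β * δ + α * γ * (α * δ + β * γ) ^ 2) * b₃
      + γ ^ 4 * β ^ 2 * b₄ + γ ^ 4 * β * δ * b₅ + γ ^ 4 * δ ^ 2 * b₆ ∧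
    b₃' = (α * δ + β * γ) ^ 3 * b₃ ∧
    b₄' = β ^ 4 * α ^ 2 * b₀ + β ^ 4 * α * γ * b₁ + β ^ 4 * γ ^ 2 * b₂
      + (β ^ 2 * δ ^ 2 * α * γ + β * δ * (α * δ + β * γ) ^ 2) * b₃
      + δ ^ 4 * α ^ 2 * b₄ + δ ^ 4 * α * γ * b₅ + δ ^ 4 * γ ^ 2 * b₆ ∧
    b₅' = (α * δ + β * γ) * (β ^ 4 * b₁ + β ^ 2 * δ ^ 2 * b₃ + δ ^ 4 * b₅) ∧
    b₆' = β ^ 6 * b₀ + β ^ 5 * δ * b₁ + β ^ 4 * δ ^ 2 * b₂ + β ^ 3 * δ ^ 3 * b₃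
      + β ^ 2 * δ ^ 4 * b₄ + β * δ ^ 5 * b₅ + δ ^ 6 * b₆ := by
  have h := congrArg (aeval ![(1 : Polynomial A), Polynomial.X]) hb
  simp only [map_add, map_mul, map_pow, bind₁_X_right, bind₁_C_right, aeval_X, aeval_C,
    Polynomial.algebraMap_eq, Matrix.cons_val_zero, Matrix.cons_val_one, one_pow, mul_one] at h
  apply sextic_ext
  rw [h]
  simp only [map_add, map_mul, map_pow]
  clear h hb
  generalize (Polynomial.X : Polynomial A) = x
  grind

/-- The mod 2 Hessian `h₀ x₁² + K₁ x₁x₂ + h₂ x₂²` of the cubic is a covariant: its coefficients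
transform by the substitution, up to `(αδ + βγ) ^ 2`. The middle coefficient `K₁` is itself an
invariant. -/
theorem hessian_transform {A : Type*} [CommRing A] [CharP A 2]
    {a₀ a₁ a₂ a₃ α β γ δ a₀' a₁' a₂' a₃' : A}
    (h0 : a₀' = a₀ * α ^ 3 + a₁ * α ^ 2 * γ + a₂ * α * γ ^ 2 + a₃ * γ ^ 3)
    (h1 : a₁' = a₀ * α ^ 2 * β + a₁ * α ^ 2 * δ + a₂ * β * γ ^ 2 + a₃ * γ ^ 2 * δ)
    (h2 : a₂' = a₀ * α * β ^ 2 + a₁ * β ^ 2 * γ + a₂ * α * δ ^ 2 + a₃ * γ * δ ^ 2)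
    (h3 : a₃' = a₀ * β ^ 3 + a₁ * β ^ 2 * δ + a₂ * β * δ ^ 2 + a₃ * δ ^ 3) :
    a₀' * a₃' + a₁' * a₂' = (α * δ + β * γ) ^ 3 * (a₀ * a₃ + a₁ * a₂) ∧
    a₀' * a₂' + a₁' ^ 2 = (α * δ + β * γ) ^ 2 * (α ^ 2 * (a₀ * a₂ + a₁ ^ 2)
      + α * γ * (a₀ * a₃ + a₁ * a₂) + γ ^ 2 * (a₁ * a₃ + a₂ ^ 2)) ∧
    a₁' * a₃' + a₂' ^ 2 = (α * δ + β * γ) ^ 2 * (β ^ 2 * (a₀ * a₂ + a₁ ^ 2)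
      + β * δ * (a₀ * a₃ + a₁ * a₂) + δ ^ 2 * (a₁ * a₃ + a₂ ^ 2)) := by
  subst h0 h1 h2 h3
  refine ⟨?_, ?_, ?_⟩ <;> grind

/-- The part `Q` of `K₃`, quadratic in the cubic `a` and linear in the sextic `b`, that occurs
there with the factor `K₁`. -/
def Q {A : Type*} [CommRing A] (a₀ a₁ a₂ a₃ b₀ b₁ b₂ b₃ b₄ b₅ b₆ : A) : A :=
  a₀ ^ 2 * b₆ + a₁ ^ 2 * b₄ + a₂ ^ 2 * b₂ + a₃ ^ 2 * b₀
    + a₀ * a₁ * b₅ + a₀ * a₃ * b₃ + a₂ * a₃ * b₁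

theorem K₃_eq {A : Type*} [CommRing A] [CharP A 2] (a₀ a₁ a₂ a₃ b₀ b₁ b₂ b₃ b₄ b₅ b₆ : A) :
    K₃ a₀ a₁ a₂ a₃ b₀ b₁ b₂ b₃ b₄ b₅ b₆ =
      (a₀ * a₃ + a₁ * a₂) * b₃ ^ 2 + (a₀ * a₃ + a₁ * a₂) * Q a₀ a₁ a₂ a₃ b₀ b₁ b₂ b₃ b₄ b₅ b₆
        + (a₀ * a₂ + a₁ ^ 2) ^ 2 * b₅
        + (a₀ * a₂ + a₁ ^ 2) * (a₁ * a₃ + a₂ ^ 2) * b₃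
        + (a₁ * a₃ + a₂ ^ 2) ^ 2 * b₁ := by
  unfold K₃ Q
  grind

set_option maxHeartbeats 1000000 in
/-- `Q` is invariant up to a defect that involves only the Hessian of `a` and `b₁`, `b₃`, `b₅`. -/
theorem Q_transform {A : Type*} [CommRing A] [CharP A 2]
    {a₀ a₁ a₂ a₃ b₀ b₁ b₂ b₃ b₄ b₅ b₆ α β γ δ
      a₀' a₁' a₂' a₃' b₀' b₁' b₂' b₃' b₄' b₅' b₆' : A}
    (h0 : a₀' = a₀ * α ^ 3 + a₁ * α ^ 2 * γ + a₂ * α * γ ^ 2 + a₃ * γ ^ 3)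
    (h1 : a₁' = a₀ * α ^ 2 * β + a₁ * α ^ 2 * δ + a₂ * β * γ ^ 2 + a₃ * γ ^ 2 * δ)
    (h2 : a₂' = a₀ * α * β ^ 2 + a₁ * β ^ 2 * γ + a₂ * α * δ ^ 2 + a₃ * γ * δ ^ 2)
    (h3 : a₃' = a₀ * β ^ 3 + a₁ * β ^ 2 * δ + a₂ * β * δ ^ 2 + a₃ * δ ^ 3)
    (hb0 : b₀' = α ^ 6 * b₀ + α ^ 5 * γ * b₁ + α ^ 4 * γ ^ 2 * b₂ + α ^ 3 * γ ^ 3 * b₃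
      + α ^ 2 * γ ^ 4 * b₄ + α * γ ^ 5 * b₅ + γ ^ 6 * b₆)
    (hb1 : b₁' = (α * δ + β * γ) * (α ^ 4 * b₁ + α ^ 2 * γ ^ 2 * b₃ + γ ^ 4 * b₅))
    (hb2 : b₂' = α ^ 4 * β ^ 2 * b₀ + α ^ 4 * β * δ * b₁ + α ^ 4 * δ ^ 2 * b₂
      + (α ^ 2 * γ ^ 2 * β * δ + α * γ * (α * δ + β * γ) ^ 2) * b₃
      + γ ^ 4 * β ^ 2 * b₄ + γ ^ 4 * β * δ * b₅ + γ ^ 4 * δ ^ 2 * b₆)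
    (hb3 : b₃' = (α * δ + β * γ) ^ 3 * b₃)
    (hb4 : b₄' = β ^ 4 * α ^ 2 * b₀ + β ^ 4 * α * γ * b₁ + β ^ 4 * γ ^ 2 * b₂
      + (β ^ 2 * δ ^ 2 * α * γ + β * δ * (α * δ + β * γ) ^ 2) * b₃
      + δ ^ 4 * α ^ 2 * b₄ + δ ^ 4 * α * γ * b₅ + δ ^ 4 * γ ^ 2 * b₆)
    (hb5 : b₅' = (α * δ + β * γ) * (β ^ 4 * b₁ + β ^ 2 * δ ^ 2 * b₃ + δ ^ 4 * b₅))
    (hb6 : b₆' = β ^ 6 * b₀ + β ^ 5 * δ * b₁ + β ^ 4 * δ ^ 2 * b₂ + β ^ 3 * δ ^ 3 * b₃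
      + β ^ 2 * δ ^ 4 * b₄ + β * δ ^ 5 * b₅ + δ ^ 6 * b₆) :
    Q a₀' a₁' a₂' a₃' b₀' b₁' b₂' b₃' b₄' b₅' b₆'
      = (α * δ + β * γ) ^ 6 * Q a₀ a₁ a₂ a₃ b₀ b₁ b₂ b₃ b₄ b₅ b₆
        + (α * δ + β * γ) ^ 4 * ((a₀ * a₃ + a₁ * a₂)
            * (α ^ 2 * β ^ 2 * b₁ + γ ^ 2 * δ ^ 2 * b₅ + α * β * γ * δ * b₃)
          + (α * δ + β * γ) * b₃
            * (α * β * (a₀ * a₂ + a₁ ^ 2) + γ * δ * (a₁ * a₃ + a₂ ^ 2))) := by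
  subst h0 h1 h2 h3 hb0 hb1 hb2 hb3 hb4 hb5 hb6
  unfold Q
  grind

/-- In characteristic 2, the invariant `K₃` is invariant under the simultaneous
SL(2)-action `x₁ ↦ αx₁ + βx₂`, `x₂ ↦ γx₁ + δx₂` (with `αδ + βγ = 1`) on the pair
`(a, b)` of a binary cubic and a binary sextic. -/
theorem K3_SL2_invariant (A : Type*) [CommRing A] (h2 : (2 : A) = 0)
    (a₀ a₁ a₂ a₃ b₀ b₁ b₂ b₃ b₄ b₅ b₆ α β γ δ : A)
    (a₀' a₁' a₂' a₃' b₀' b₁' b₂' b₃' b₄' b₅' b₆' : A)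
    (hdet : α * δ + β * γ = 1)
    (ha :
      (C a₀' * X 0 ^ 3 + C a₁' * X 0 ^ 2 * X 1 + C a₂' * X 0 * X 1 ^ 2 + C a₃' * X 1 ^ 3
        : MvPolynomial (Fin 2) A) =
      bind₁ ![C α * X 0 + C β * X 1, C γ * X 0 + C δ * X 1]
        (C a₀ * X 0 ^ 3 + C a₁ * X 0 ^ 2 * X 1 + C a₂ * X 0 * X 1 ^ 2 + C a₃ * X 1 ^ 3))
    (hb :
      (C b₀' * X 0 ^ 6 + C b₁' * X 0 ^ 5 * X 1 + C b₂' * X 0 ^ 4 * X 1 ^ 2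
        + C b₃' * X 0 ^ 3 * X 1 ^ 3 + C b₄' * X 0 ^ 2 * X 1 ^ 4 + C b₅' * X 0 * X 1 ^ 5
        + C b₆' * X 1 ^ 6 : MvPolynomial (Fin 2) A) =
      bind₁ ![C α * X 0 + C β * X 1, C γ * X 0 + C δ * X 1]
        (C b₀ * X 0 ^ 6 + C b₁ * X 0 ^ 5 * X 1 + C b₂ * X 0 ^ 4 * X 1 ^ 2
          + C b₃ * X 0 ^ 3 * X 1 ^ 3 + C b₄ * X 0 ^ 2 * X 1 ^ 4 + C b₅ * X 0 * X 1 ^ 5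
          + C b₆ * X 1 ^ 6)) :
    K₃ a₀' a₁' a₂' a₃' b₀' b₁' b₂' b₃' b₄' b₅' b₆' =
      K₃ a₀ a₁ a₂ a₃ b₀ b₁ b₂ b₃ b₄ b₅ b₆ := by
  -- The zero ring, where `2 = 0` holds without the characteristic being 2, is split off.
  rcases subsingleton_or_nontrivial A with _ | _
  · exact Subsingleton.elim _ _
  have : CharP A 2 := CharTwo.of_one_ne_zero_of_two_eq_zero one_ne_zero h2
  obtain ⟨e0, e1, e2, e3⟩ := cubic_coeff ha
  obtain ⟨f0, f1, f2, f3, f4, f5, f6⟩ := sextic_coeff hb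
  have hQ := Q_transform e0 e1 e2 e3 f0 f1 f2 f3 f4 f5 f6
  obtain ⟨hK, hh0, hh2⟩ := hessian_transform e0 e1 e2 e3
  suffices h : K₃ a₀' a₁' a₂' a₃' b₀' b₁' b₂' b₃' b₄' b₅' b₆' =
      (α * δ + β * γ) ^ 9 * K₃ a₀ a₁ a₂ a₃ b₀ b₁ b₂ b₃ b₄ b₅ b₆ by
    rw [h, hdet, one_pow, one_mul]
  rw [K₃_eq, K₃_eq, hQ, hK, hh0, hh2, f1, f3, f5]
  clear hQ hK hh0 hh2 e0 e1 e2 e3 f0 f1 f2 f3 f4 f5 f6 ha hb hdet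
  -- What remains is an identity in `K₁`, `h₀`, `h₂`, `Q`, regarded as independent variables.
  generalize Q a₀ a₁ a₂ a₃ b₀ b₁ b₂ b₃ b₄ b₅ b₆ = q
  generalize a₀ * a₃ + a₁ * a₂ = k
  generalize a₀ * a₂ + a₁ ^ 2 = p
  generalize a₁ * a₃ + a₂ ^ 2 = r
  grind
end

section
/- In the polynomial ring ℤ[a₀, a₁, a₂, a₃, b₀, …, b₆], define cᵢ = 4bᵢ + Σ_{0 ≤ r,s ≤ 3, r+s=i} a_r a_s for 0 ≤ i ≤ 6 (the sum over ordered pairs (r,s)). Then there exists Q ∈ ℤ[a₀, …, a₃, b₀, …, b₆] such that −120·c₀c₆ + 20·c₁c₅ − 8·c₂c₄ + 3·c₃² = 4·Q, and the image of Q under the reduction map ℤ[a₀,…,b₆] → 𝔽₂[a₀,…,b₆] equals (a₀a₃ + a₁a₂)². In other words, the Igusa invariant J₂ = 2⁻²(−120c₀c₆ + 20c₁c₅ − 8c₂c₄ + 3c₃²) of the binary sextic ã² + 4b̃ reduces modulo 2 to the invariant K₂ = K₁², where K₁ = a₀a₃ + a₁a₂. -/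
/-!
The odd-indexed sums `Σ_{r+s=i} a_r a_s` have no diagonal term, so `c₁ = 2e` and `c₃ = 2d`
with `e = 2b₁ + a₀a₁` and `d = 2b₃ + K₁`, where `K₁ = a₀a₃ + a₁a₂`. Hence the bracket is
`4Q` with `Q = -30c₀c₆ + 10ec₅ - 2c₂c₄ + 3d²`, and modulo 2 only `d² ≡ K₁²` survives.
-/

open MvPolynomial

/-- The coefficient `a_i` of the universal binary cubic, as a variable in
`ℤ[a₀,…,a₃,b₀,…,b₆]`. -/
noncomputable def aVar (i : Fin 4) : MvPolynomial (Fin 4 ⊕ Fin 7) ℤ := X (Sum.inl i)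

/-- The coefficient `b_j` of the universal binary sextic, as a variable in
`ℤ[a₀,…,a₃,b₀,…,b₆]`. -/
noncomputable def bVar (j : Fin 7) : MvPolynomial (Fin 4 ⊕ Fin 7) ℤ := X (Sum.inr j)

/-- `c_i = 4 b_i + Σ_{r+s=i} a_r a_s`, the `i`-th coefficient of the binary sextic
`ã² + 4b̃`. -/
noncomputable def cVar (i : Fin 7) : MvPolynomial (Fin 4 ⊕ Fin 7) ℤ :=
  4 * bVar i + ∑ p : Fin 4 × Fin 4, if (p.1 : ℕ) + (p.2 : ℕ) = (i : ℕ)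
    then aVar p.1 * aVar p.2 else 0

theorem cVar_one_eq : cVar 1 = 2 * (2 * bVar 1 + aVar 0 * aVar 1) := by
  simp [cVar, Fintype.sum_prod_type, Fin.sum_univ_four]
  ring

theorem cVar_three_eq :
    cVar 3 = 2 * (2 * bVar 3 + (aVar 0 * aVar 3 + aVar 1 * aVar 2)) := by
  simp [cVar, Fintype.sum_prod_type, Fin.sum_univ_four]
  ring

/-- The Igusa invariant `J₂ = 2⁻²(−120c₀c₆ + 20c₁c₅ − 8c₂c₄ + 3c₃²)` of the binary
sextic `ã² + 4b̃` is integral (the quantity in brackets is divisible by 4) and reduces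
modulo 2 to the invariant `K₂ = K₁² = (a₀a₃ + a₁a₂)²`. -/
theorem J2_reduces_to_K1_sq :
    ∃ Q : MvPolynomial (Fin 4 ⊕ Fin 7) ℤ,
      (-120) * cVar 0 * cVar 6 + 20 * cVar 1 * cVar 5 - 8 * cVar 2 * cVar 4
          + 3 * cVar 3 ^ 2 = 4 * Q ∧
      MvPolynomial.map (Int.castRingHom (ZMod 2)) Q =
        (X (Sum.inl 0) * X (Sum.inl 3) + X (Sum.inl 1) * X (Sum.inl 2)) ^ 2 := by
  -- `Q` written as `K₁² + 2R`, so that its reduction modulo 2 is visible.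
  refine ⟨(aVar 0 * aVar 3 + aVar 1 * aVar 2) ^ 2
    + 2 * (-15 * cVar 0 * cVar 6 + 5 * (2 * bVar 1 + aVar 0 * aVar 1) * cVar 5
      - cVar 2 * cVar 4 + (2 * bVar 3 + (aVar 0 * aVar 3 + aVar 1 * aVar 2)) ^ 2
      + 2 * bVar 3 ^ 2 + 2 * bVar 3 * (aVar 0 * aVar 3 + aVar 1 * aVar 2)), ?_, ?_⟩
  · rw [cVar_one_eq, cVar_three_eq]
    ring
  · have h2 : (2 : MvPolynomial (Fin 4 ⊕ Fin 7) (ZMod 2)) = 0 := CharTwo.two_eq_zero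
    rw [map_add, map_mul _ 2, map_ofNat, h2, zero_mul, add_zero]
    simp [aVar]
end

section
/- For each natural number k let r(k) be the number of quintuples (a, b, c, d, e) of natural numbers with a + 10b + 12c + 13d + 48e = k and d ≤ 3, and let c(k) = ⌊k/12⌋ + 1. Then for every k ≥ 10 whose residue modulo 12 is not 0, 1 or 2, one has r(k) − r(k − 10) = c(k)·(c(k) + 1)/2. -/
/-!
Quintuples with `b ≥ 1` correspond to the quintuples counted by `r (k - 10)` by lowering `b` by one,
so the difference counts the quintuples with `b = 0`. The exponent `a` is determined by the others,
and the pairs `(d, e)` with `d ≤ 3` are encoded by `m = d + 4e`, for which `13d + 48e = 12m + m % 4`.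
The condition on `(c, m)` is thus `12(c + m) + m % 4 ≤ k`; as `m % 4 ≤ 3 ≤ k % 12`, it is equivalent
to `c + m ≤ k / 12`. The number of such pairs is the triangular number of `k / 12 + 1`.
-/

/-- `r k` is the number of quintuples `(a, b, c, d, e)` of natural numbers with
`a + 10b + 12c + 13d + 48e = k` and `d ≤ 3`. -/
noncomputable def r (k : ℕ) : ℕ :=
  Nat.card {q : ℕ × ℕ × ℕ × ℕ × ℕ //
    q.1 + 10 * q.2.1 + 12 * q.2.2.1 + 13 * q.2.2.2.1 + 48 * q.2.2.2.2 = k ∧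
    q.2.2.2.1 ≤ 3}

/-- `c k = ⌊k/12⌋ + 1`, the dimension of the space of elliptic modular forms of
weight `k` in characteristic 2. -/
def c (k : ℕ) : ℕ := k / 12 + 1

/-- The solutions counted by `r k`. -/
abbrev Sol (k : ℕ) : Type := {q : ℕ × ℕ × ℕ × ℕ × ℕ //
    q.1 + 10 * q.2.1 + 12 * q.2.2.1 + 13 * q.2.2.2.1 + 48 * q.2.2.2.2 = k ∧
    q.2.2.2.1 ≤ 3}

/-- Pairs `(c, m)` with `c + m ≤ n`, encoded as `⟨c + m, m⟩`. -/
abbrev Tri (n : ℕ) : Type := Σ i : Fin (n + 1), Fin (i.val + 1)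

instance Sol.finite (k : ℕ) : Finite (Sol k) := by
  refine Set.Finite.to_subtype (Set.Finite.subset (Set.finite_Iic (k, k, k, k, k)) ?_)
  rintro ⟨a, b, c, d, e⟩ ⟨h, -⟩
  simp only [Set.mem_Iic, Prod.mk_le_mk] at h ⊢
  omega

lemma card_tri (n : ℕ) : Nat.card (Tri n) = (n + 1) * (n + 1 + 1) / 2 := by
  rw [Nat.card_eq_fintype_card, Fintype.card_sigma]
  simp only [Fintype.card_fin]
  rw [Fin.sum_univ_eq_sum_range (fun i => i + 1) (n + 1)]
  have h := Finset.sum_range_succ' (fun i : ℕ => i) (n + 1)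
  rw [Finset.sum_range_id] at h
  simp only [add_zero, Nat.add_sub_cancel] at h
  rw [← h, mul_comm]

/-- Raises `b` by one on the left summand; on the right summand, decodes `⟨c + m, m⟩` to the
solution with `b = 0`, `d = m % 4` and `e = m / 4`. -/
def glue (k : ℕ) (hk : 10 ≤ k) (h3 : 3 ≤ k % 12) :
    Sol (k - 10) ⊕ Tri (k / 12) → Sol k
  | .inl ⟨(a, b, c, d, e), h⟩ => ⟨(a, b + 1, c, d, e), by dsimp only at h ⊢; omega⟩
  | .inr ⟨i, m⟩ =>
      ⟨(k - 12 * i.val - m.val % 4, 0, i.val - m.val, m.val % 4, m.val / 4), by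
        have := i.isLt
        have := m.isLt
        dsimp only
        omega⟩

lemma glue_bijective (k : ℕ) (hk : 10 ≤ k) (h3 : 3 ≤ k % 12) :
    Function.Bijective (glue k hk h3) := by
  constructor
  · rintro (⟨⟨a, b, c, d, e⟩, h⟩ | ⟨⟨i, hi⟩, ⟨m, hm⟩⟩)
      (⟨⟨a', b', c', d', e'⟩, h'⟩ | ⟨⟨i', hi'⟩, ⟨m', hm'⟩⟩) heq
    · simpa [glue] using heq
    · simp [glue] at heq
    · simp [glue] at heq
    · simp only [glue, Subtype.mk.injEq, Prod.mk.injEq] at heq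
      dsimp only at hm hm'
      obtain rfl : m = m' := by omega
      obtain rfl : i = i' := by omega
      rfl
  · rintro ⟨⟨a, b, c, d, e⟩, h⟩
    dsimp only at h
    rcases b with _ | b
    · refine ⟨.inr ⟨⟨c + (d + 4 * e), by omega⟩, ⟨d + 4 * e, by dsimp only; omega⟩⟩, ?_⟩
      simp only [glue, Subtype.mk.injEq, Prod.mk.injEq]
      refine ⟨?_, trivial, ?_, ?_, ?_⟩ <;> omega
    · exact ⟨.inl ⟨(a, b, c, d, e), by dsimp only; omega⟩, rfl⟩

/-- For `k ≥ 10` with `k mod 12 ∉ {0, 1, 2}` one has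
`r(k) − r(k−10) = c(k)(c(k)+1)/2`. -/
theorem r_difference (k : ℕ) (hk : 10 ≤ k)
    (h0 : k % 12 ≠ 0) (h1 : k % 12 ≠ 1) (h2 : k % 12 ≠ 2) :
    r k = r (k - 10) + c k * (c k + 1) / 2 := by
  have h := Nat.card_eq_of_bijective _ (glue_bijective k hk (by omega))
  rw [Nat.card_sum, card_tri] at h
  exact h.symm
end

section
/- The polynomial R = X₁₃⁴ + X₁³X₁₀X₁₃³ + X₁⁴X₄₈ + X₁₀⁴X₁₂ is irreducible in the polynomial ring 𝔽₂[X₁, X₁₀, X₁₂, X₁₃, X₄₈]; equivalently, the quotient ring 𝔽₂[X₁, X₁₀, X₁₂, X₁₃, X₄₈]/(R) is an integral domain. -/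
/-!
`R` has degree one in `X₄₈`, with leading coefficient `X₁⁴` and constant term
`g = X₁₃⁴ + X₁³X₁₀X₁₃³ + X₁₀⁴X₁₂`. A polynomial of degree one in a variable is irreducible as soon
as these two coefficients have no common factor. Since `X₁` is irreducible, it is enough that
`X₁ ∤ g`, and indeed `g` takes the value `1` at the point with `X₁₃ = 1` and all other coordinates
`0`.
-/

open MvPolynomial

/-- The relation `R = X₁₃⁴ + X₁³X₁₀X₁₃³ + X₁⁴X₄₈ + X₁₀⁴X₁₂` is irreducible in
`𝔽₂[X₁, X₁₀, X₁₂, X₁₃, X₄₈]`, where the variables `X₁, X₁₀, X₁₂, X₁₃, X₄₈` are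
`X 0, X 1, X 2, X 3, X 4`. -/
theorem Rrel_irreducible :
    Irreducible
      (X 3 ^ 4 + X 0 ^ 3 * X 1 * X 3 ^ 3 + X 0 ^ 4 * X 4 + X 1 ^ 4 * X 2 :
        MvPolynomial (Fin 5) (ZMod 2)) := by
  have hX (j : Fin 5) (hj : j ≠ 4) :
      (X j : MvPolynomial (Fin 5) (ZMod 2)) ∈ supported (ZMod 2) {j : Fin 5 | j ≠ 4} :=
    X_mem_supported.2 hj
  have hvars (p : MvPolynomial (Fin 5) (ZMod 2))
      (hp : p ∈ supported (ZMod 2) {j : Fin 5 | j ≠ 4}) : (4 : Fin 5) ∉ p.vars :=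
    fun h => mem_supported.1 hp h rfl
  have h0 := hX 0 (by decide)
  have h1 := hX 1 (by decide)
  have h2 := hX 2 (by decide)
  have h3 := hX 3 (by decide)
  have key := irreducible_mul_X_add
    (X 0 ^ 4 : MvPolynomial (Fin 5) (ZMod 2))
    (X 3 ^ 4 + X 0 ^ 3 * X 1 * X 3 ^ 3 + X 1 ^ 4 * X 2) 4
    (pow_ne_zero _ (X_ne_zero 0))
    (hvars _ (pow_mem h0 4))
    (hvars _ (add_mem (add_mem (pow_mem h3 4)
      (mul_mem (mul_mem (pow_mem h0 3) h1) (pow_mem h3 3))) (mul_mem (pow_mem h1 4) h2)))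
    (by
      refine IsRelPrime.pow_left ((X_prime.irreducible.isRelPrime_iff_not_dvd).2 fun h => ?_)
      have hv := map_dvd (eval (Pi.single 3 1 : Fin 5 → ZMod 2)) h
      simp at hv)
  convert key using 1
  ring
end
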